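/- arXiv:2501.07907 — 2 statements merged into one kernel-verified Lean document; each statement's English description precedes it below -/
import Mathlib

section
/- Let a, b, c, g be nonzero integers such that g divides each of a, b and c, and such that ν₂(c) = ν₂(g). Set h = gcd(a, b, c). Then h² divides a·b·c, g divides a·b, and the integers (a·b·c)/h² and (a·b)/g are congruent modulo 2. -/
/-!
Both sides contain the factor `q = a * b / h`: the left one is `q * (c / h)` and the right one is
`q * (h / g)`. The product of the cofactors `c / h` and `h / g` is `c / g`, which is odd because
`ν₂(c) = ν₂(g)`. So both cofactors are odd, hence congruent modulo 2.
-/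

theorem div_mul_div_cancel_of_dvd {R : Type*} [EuclideanDomain R] {g h c : R}
    (hgh : g ∣ h) (hhc : h ∣ c) : c / h * (h / g) = c / g := by
  rcases eq_or_ne h 0 with rfl | hh
  · simp [zero_dvd_iff.mp hhc]
  · rw [← EuclideanDomain.mul_div_assoc _ hgh, mul_comm, EuclideanDomain.mul_div_cancel' hh hhc]

theorem padicValInt_ediv_of_dvd {p : ℕ} [Fact p.Prime] {c g : ℤ} (hgc : g ∣ c) :
    padicValInt p (c / g) = padicValInt p c - padicValInt p g := by
  simp only [padicValInt, Int.natAbs_ediv_of_dvd hgc,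
    padicValNat.div_of_dvd (Int.natAbs_dvd_natAbs.mpr hgc)]

theorem not_dvd_ediv_of_padicValInt_eq {p : ℕ} [hp : Fact p.Prime] {c g : ℤ} (hc : c ≠ 0)
    (hgc : g ∣ c) (hval : padicValInt p c = padicValInt p g) : ¬ (p : ℤ) ∣ c / g := by
  have hzero : padicValInt p (c / g) = 0 := by
    rw [padicValInt_ediv_of_dvd hgc, hval, Nat.sub_self]
  have hquot : c / g ≠ 0 := mt (Int.eq_zero_of_ediv_eq_zero hgc) hc
  simpa only [hp.out.ne_one, hquot, false_or] using padicValInt.eq_zero_iff.mp hzero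

theorem modEq_two_of_odd_of_odd {m n : ℤ} (hm : Odd m) (hn : Odd n) : m ≡ n [ZMOD 2] :=
  (Int.odd_iff.mp hm).trans (Int.odd_iff.mp hn).symm

theorem mul_ediv_sq_modEq_ediv {d c g h n : ℤ} (hgh : g ∣ h) (hhd : h ∣ d) (hhc : h ∣ c)
    (hmod : c / h ≡ h / g [ZMOD n]) : d * c / h ^ 2 ≡ d / g [ZMOD d / h * n] := by
  rw [sq, EuclideanDomain.mul_div_mul_comm_of_dvd_dvd hhd hhc,
    ← div_mul_div_cancel_of_dvd hgh hhd]
  exact hmod.mul_left'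

theorem ediv_modEq_two_of_padicValInt_eq {c g h : ℤ} (hc : c ≠ 0) (hgh : g ∣ h) (hhc : h ∣ c)
    (hval : padicValInt 2 c = padicValInt 2 g) : c / h ≡ h / g [ZMOD 2] := by
  have hodd : Odd (c / h * (h / g)) := by
    rw [div_mul_div_cancel_of_dvd hgh hhc, ← Int.not_even_iff_odd, even_iff_two_dvd]
    exact not_dvd_ediv_of_padicValInt_eq hc (hgh.trans hhc) hval
  obtain ⟨hodd_left, hodd_right⟩ := Int.odd_mul.mp hodd
  exact modEq_two_of_odd_of_odd hodd_left hodd_right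

theorem stmt_2_general {d c g h : ℤ} (hc : c ≠ 0) (hgh : g ∣ h) (hhd : h ∣ d) (hhc : h ∣ c)
    (hval : padicValInt 2 c = padicValInt 2 g) :
    h ^ 2 ∣ d * c ∧ g ∣ d ∧ d * c / h ^ 2 ≡ d / g [ZMOD d / h * 2] :=
  ⟨sq h ▸ mul_dvd_mul hhd hhc, hgh.trans hhd,
    mul_ediv_sq_modEq_ediv hgh hhd hhc (ediv_modEq_two_of_padicValInt_eq hc hgh hhc hval)⟩

/-- Let `a, b, c, g` be nonzero integers such that `g` divides each of `a`, `b` and `c`, and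
such that `ν₂(c) = ν₂(g)`. Set `h = gcd(a, b, c)`. Then `h²` divides `a·b·c`, `g` divides
`a·b`, and the integers `(a·b·c)/h²` and `(a·b)/g` are congruent modulo 2. -/
theorem stmt_2 (a b c g : ℤ) (ha : a ≠ 0) (hb : b ≠ 0) (hc : c ≠ 0) (hg : g ≠ 0)
    (hga : g ∣ a) (hgb : g ∣ b) (hgc : g ∣ c)
    (hval : padicValInt 2 c = padicValInt 2 g)
    (h : ℤ) (hdef : h = (Int.gcd a (Int.gcd b c) : ℤ)) :
    h ^ 2 ∣ a * b * c ∧ g ∣ a * b ∧ a * b * c / h ^ 2 ≡ a * b / g [ZMOD 2] := by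
  have hgh : g ∣ h := hdef ▸ Int.dvd_coe_gcd hga (Int.dvd_coe_gcd hgb hgc)
  have hha : h ∣ a := hdef ▸ Int.gcd_dvd_left ..
  have hhc : h ∣ c := hdef ▸ (Int.gcd_dvd_right ..).trans (Int.gcd_dvd_right ..)
  obtain ⟨hsq, hgab, hmod⟩ := stmt_2_general hc hgh (hha.mul_right b) hhc hval
  exact ⟨hsq, hgab, hmod.of_mul_left _⟩
end

section
/- Let n ≥ 1 and let λ₁, …, λ_{n+2} be primitive vectors in ℤ² (each having coprime coordinates) such that det(λᵢ, λ_{i+1}) ≠ 0 for all 1 ≤ i ≤ n+1 and det(λ₁, λ_{n+2}) ≠ 0. Let g = gcd{det(λᵢ, λⱼ) : 1 ≤ i < j ≤ n+2}. Then for every prime p there exists an index i ∈ {1, …, n+2} such that ν_p(d_{i−1,i}) = ν_p(g), where d_{i−1,i} = det(λ_{i−1}, λᵢ) for 2 ≤ i ≤ n+2 and d_{0,1} is interpreted as det(λ₁, λ_{n+2}). -/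
/-!
If `b` is primitive, the identity `[a, c] b = [b, c] a + [a, b] c` in `R²` shows that every common
divisor of `[a, b]` and `[b, c]` divides `[a, c]`. Hence, along a path of vectors which are
primitive away from its ends, the determinants of consecutive vectors have the same common divisors
as the determinants of all pairs. Their gcds therefore agree, and the multiplicity of any element
in a gcd is attained at one of the terms.
-/

theorem exists_emultiplicity_eq_emultiplicity_finset_gcd {ι α : Type*} [CommMonoidWithZero α]
    [NormalizedGCDMonoid α] {s : Finset ι} (hs : s.Nonempty) (f : ι → α) (a : α) :
    ∃ i ∈ s, emultiplicity a (f i) = emultiplicity a (s.gcd f) := by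
  obtain ⟨i, hi, hmin⟩ := s.exists_min_image (fun j => emultiplicity a (f j)) hs
  refine ⟨i, hi, le_antisymm ?_ (emultiplicity_le_emultiplicity_of_dvd_right (s.gcd_dvd hi))⟩
  refine emultiplicity_le_emultiplicity_iff.2 fun k hk => Finset.dvd_gcd fun j hj => ?_
  exact emultiplicity_le_emultiplicity_iff.1 (hmin j hj) k hk

theorem padicValInt_eq_of_emultiplicity_eq {p : ℕ} {a b : ℤ}
    (h : emultiplicity (p : ℤ) a = emultiplicity (p : ℤ) b) :
    padicValInt p a = padicValInt p b := by
  rcases eq_or_ne p 1 with rfl | hp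
  · simp [padicValInt]
  have ha_iff_hb : a = 0 ↔ b = 0 := by
    have htop : emultiplicity (p : ℤ) a = ⊤ ↔ emultiplicity (p : ℤ) b = ⊤ := by rw [h]
    simpa [emultiplicity_eq_top, Int.finiteMultiplicity_iff, hp] using htop
  rcases eq_or_ne a 0 with ha | ha
  · rw [ha, ha_iff_hb.1 ha]
  · rw [padicValInt.of_ne_one_ne_zero hp ha,
      padicValInt.of_ne_one_ne_zero hp (mt ha_iff_hb.2 ha),
      multiplicity_eq_of_emultiplicity_eq h]

theorem dvd_of_isCoprime_of_dvd_mul_of_dvd_mul {R : Type*} [CommSemiring R] {m x y z : R}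
    (hxy : IsCoprime x y) (hx : m ∣ z * x) (hy : m ∣ z * y) : m ∣ z := by
  obtain ⟨u, v, huv⟩ := hxy
  have hz : z = u * (z * x) + v * (z * y) := by
    calc z = z * (u * x + v * y) := by rw [huv, mul_one]
      _ = u * (z * x) + v * (z * y) := by ring
  rw [hz]
  exact dvd_add (hx.mul_left u) (hy.mul_left v)

/-- The determinant `[a, b]` of the `2 × 2` matrix formed by two vectors of `R²`, which are encoded
as pairs. -/
def planeDet {R : Type*} [CommRing R] (a b : R × R) : R :=
  a.1 * b.2 - a.2 * b.1

section PlaneDet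

variable {R : Type*} [CommRing R]

theorem planeDet_smul_eq_add (a b c : R × R) :
    planeDet a c • b = planeDet b c • a + planeDet a b • c := by
  ext <;> simp only [planeDet, Prod.fst_add, Prod.snd_add, Prod.smul_fst, Prod.smul_snd,
    smul_eq_mul] <;> ring

theorem dvd_planeDet_trans {m : R} {a b c : R × R} (hb : IsCoprime b.1 b.2)
    (hab : m ∣ planeDet a b) (hbc : m ∣ planeDet b c) : m ∣ planeDet a c := by
  have hfst : planeDet a c * b.1 = planeDet b c * a.1 + planeDet a b * c.1 :=
    congrArg Prod.fst (planeDet_smul_eq_add a b c)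
  have hsnd : planeDet a c * b.2 = planeDet b c * a.2 + planeDet a b * c.2 :=
    congrArg Prod.snd (planeDet_smul_eq_add a b c)
  apply dvd_of_isCoprime_of_dvd_mul_of_dvd_mul hb
  · exact hfst ▸ dvd_add (hbc.mul_right _) (hab.mul_right _)
  · exact hsnd ▸ dvd_add (hbc.mul_right _) (hab.mul_right _)

theorem forall_lt_dvd_planeDet_iff {n : ℕ} {v : Fin (n + 1) → R × R}
    (hv : ∀ i, i ≠ 0 → i ≠ Fin.last n → IsCoprime (v i).1 (v i).2) {m : R} :
    (∀ i j, i < j → m ∣ planeDet (v i) (v j)) ↔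
      ∀ i : Fin n, m ∣ planeDet (v i.castSucc) (v i.succ) := by
  refine ⟨fun h i => h _ _ Fin.castSucc_lt_succ, fun h i j => ?_⟩
  induction j using Fin.induction with
  | zero => exact fun hi => absurd hi (Fin.not_lt_zero i)
  | succ j ih =>
    intro hij
    rcases (Fin.le_castSucc_iff.2 hij).eq_or_lt with rfl | hlt
    · exact h j
    · have hj : IsCoprime (v j.castSucc).1 (v j.castSucc).2 :=
        hv _ (Fin.ne_zero_of_lt hlt) (Fin.castSucc_ne_last j)
      exact dvd_planeDet_trans hj (ih hlt) (h j)

theorem gcd_planeDet_eq_gcd_consecutive [NormalizedGCDMonoid R] {n : ℕ}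
    {v : Fin (n + 1) → R × R}
    (hv : ∀ i, i ≠ 0 → i ≠ Fin.last n → IsCoprime (v i).1 (v i).2) :
    (Finset.univ.filter fun q : Fin (n + 1) × Fin (n + 1) => q.1 < q.2).gcd
        (fun q => planeDet (v q.1) (v q.2)) =
      Finset.univ.gcd fun i : Fin n => planeDet (v i.castSucc) (v i.succ) := by
  have dvd_iff (m : R) :
      m ∣ (Finset.univ.filter fun q : Fin (n + 1) × Fin (n + 1) => q.1 < q.2).gcd
          (fun q => planeDet (v q.1) (v q.2)) ↔
        m ∣ Finset.univ.gcd fun i : Fin n => planeDet (v i.castSucc) (v i.succ) := by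
    simpa [Finset.dvd_gcd_iff] using forall_lt_dvd_planeDet_iff hv
  exact dvd_antisymm_of_normalize_eq Finset.normalize_gcd Finset.normalize_gcd
    ((dvd_iff _).1 dvd_rfl) ((dvd_iff _).2 dvd_rfl)

theorem stmt_8_general [NormalizedGCDMonoid R] {n : ℕ} (v : Fin (n + 2) → R × R)
    (hv : ∀ i, i ≠ 0 → i ≠ Fin.last (n + 1) → IsCoprime (v i).1 (v i).2) (a : R) :
    ∃ i : Fin (n + 1), emultiplicity a (planeDet (v i.castSucc) (v i.succ)) =
      emultiplicity a
        ((Finset.univ.filter fun q : Fin (n + 2) × Fin (n + 2) => q.1 < q.2).gcd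
          fun q => planeDet (v q.1) (v q.2)) := by
  obtain ⟨i, -, hi⟩ := exists_emultiplicity_eq_emultiplicity_finset_gcd Finset.univ_nonempty
    (fun i : Fin (n + 1) => planeDet (v i.castSucc) (v i.succ)) a
  exact ⟨i, hi.trans (by rw [gcd_planeDet_eq_gcd_consecutive hv])⟩

end PlaneDet

/-- Let `n ≥ 1` and let `λ₁, …, λ_{n+2}` be primitive vectors in `ℤ²` (each having coprime
coordinates) such that all determinants of cyclically adjacent vectors are nonzero. Let `g`
be the gcd of all the determinants `det(λᵢ, λⱼ)` for `i < j`. Then for every prime `p` there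
is an index `i` such that the determinant of the adjacent vectors at the corresponding vertex
has the same `p`-adic valuation as `g`. -/
theorem stmt_8 (n : ℕ) (hn : 1 ≤ n) (lam : Fin (n + 2) → ℤ × ℤ)
    (hprim : ∀ i, IsCoprime (lam i).1 (lam i).2)
    (hadj : ∀ i : Fin (n + 2),
      (lam i).1 * (lam (i + 1)).2 - (lam i).2 * (lam (i + 1)).1 ≠ 0)
    (g : ℤ)
    (hgdef : g = Finset.gcd
      (Finset.univ.filter fun q : Fin (n + 2) × Fin (n + 2) => q.1 < q.2)
      (fun q => (lam q.1).1 * (lam q.2).2 - (lam q.1).2 * (lam q.2).1))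
    (p : ℕ) (hp : p.Prime) :
    ∃ i : Fin (n + 2),
      padicValInt p ((lam i).1 * (lam (i + 1)).2 - (lam i).2 * (lam (i + 1)).1)
        = padicValInt p g := by
  obtain ⟨i, hi⟩ := stmt_8_general lam (fun i _ _ => hprim i) (p : ℤ)
  rw [← Fin.coeSucc_eq_succ] at hi
  exact ⟨i.castSucc, hgdef ▸ padicValInt_eq_of_emultiplicity_eq hi⟩
end
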